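/- Let H_n be the physicists' Hermite polynomials, D = {d_1 < … < d_M} a finite set of positive integers, and N ∈ ℕ with N ∉ D. Set Ξ_D = W[H_{d_1},…,H_{d_M}] and Q = P_{D,N} = W[H_{d_1},…,H_{d_M},H_N]. Fix j ∈ {1,…,M} and ε ∈ {0,…,d_j−1} \ D, and let Ξ_{D′} = W[H_{d_1},…,H_{d_{j−1}},H_ε,H_{d_{j+1}},…,H_{d_M}] and P_{D′,N} = W[H_{d_1},…,H_{d_{j−1}},H_ε,H_{d_{j+1}},…,H_{d_M},H_N]. Set Ẽ = 2(d_j + ε − N) and E″ = 4(N − d_j). Then the following identity holds in ℝ[X]: Ξ_{D′}·(−Q″ + 2·X·Q′) + 2·(Ξ_{D′})′·Q′ − (Ξ_{D′})″·Q − 2·X·(Ξ_{D′})′·Q + (2M − Ẽ)·Ξ_{D′}·Q = E″·P_{D′,N}·Ξ_D, where ′ and ″ denote first and second polynomial derivatives. -/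

import Mathlib

/-!
Let `S` be the family of seeds `H_{d_k}` with `k ≠ j`, of size `m = M - 1`, and put `w = W[S]`,
`A = W[S, H_{d_j}]`, `E = W[S, H_ε]`, `H = W[S, H_N]`. Up to signs, `Ξ_D`, `Ξ_{D′}` are `A`, `E`, and
`P_{D,N}`, `P_{D′,N}` are `Q = W[S, H_N, H_{d_j}]`, `R = W[S, H_N, H_ε]` (`wronskian_move`).

Two facts carry the proof. Jacobi's identity (`wronskian_jacobi`) gives `w Q = H A′ - H′ A` and
`w R = H E′ - H′ E`. Crum's theorem in bilinear form (`wronskian_bilinear`, `hermite_crum`) says that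
`A / w`, `E / w`, `H / w` are eigenfunctions of one second-order operator, with the eigenvalues of
`H_{d_j}`, `H_ε`, `H_N`. The basic equation is then the elementary computation for a single seed,
carried out with denominators cleared (`basic_equation_of_bilinear`).

Both facts have the same proof. By expansion along the last column, `f ↦ W[S, f]` is a differential
operator `w ∂^m - w′ ∂^(m-1) + ⋯` (`exists_wronskian_snoc`). The difference of the two sides, as an
operator in `f`, has order less than `m`, since the higher coefficients cancel, and it kills the `m`
members of `S`. As `w ≠ 0` (`wronskian_ne_zero`), it is zero (`OrderLT.eq_zero`).
-/



open Polynomial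

/-- The physicists' Hermite polynomials: `H_0 = 1`, `H_{n+1} = 2·X·H_n − H_n′`. -/
noncomputable def hermiteP : ℕ → Polynomial ℝ
  | 0 => 1
  | n + 1 => 2 * Polynomial.X * hermiteP n - Polynomial.derivative (hermiteP n)

/-- The Wronskian `W[f_1,…,f_m]`: determinant of the matrix whose `(i,j)` entry is the
`i`-th derivative of `f j` (indices starting from `0`). -/
noncomputable def wronskian {m : ℕ} (f : Fin m → Polynomial ℝ) : Polynomial ℝ :=
  (Matrix.of fun i j : Fin m => Polynomial.derivative^[(i : ℕ)] (f j)).det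

/-- The Krein–Adler polynomial `P_{D,n} = W[H_{d_1},…,H_{d_M},H_n]` based on the
physicists' Hermite polynomials. -/
noncomputable def KAHermite {M : ℕ} (d : Fin M → ℕ) (n : ℕ) : Polynomial ℝ :=
  wronskian (Fin.snoc (fun j => hermiteP (d j)) (hermiteP n))

/-- The denominator polynomial `Ξ_D = W[H_{d_1},…,H_{d_M}]`. -/
noncomputable def XiHermite {M : ℕ} (d : Fin M → ℕ) : Polynomial ℝ :=
  wronskian (fun j => hermiteP (d j))

lemma hermiteP_ode (n : ℕ) :
    derivative (derivative (hermiteP n)) =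
      2 * X * derivative (hermiteP n) - C (2 * (n : ℝ)) * hermiteP n := by
  induction n with
  | zero => simp [hermiteP]
  | succ n ih =>
    have h1 : derivative (hermiteP (n + 1)) = C (2 * (n : ℝ) + 2) * hermiteP n := by
      simp only [hermiteP, derivative_sub, derivative_mul, derivative_ofNat, derivative_X, ih,
        map_add, map_mul, map_ofNat]
      ring
    rw [h1, derivative_C_mul]
    simp only [hermiteP, map_add, map_mul, map_ofNat, map_natCast, Nat.cast_add, Nat.cast_one,
      map_one]
    ring

lemma hermiteP_natDegree_coeff (n : ℕ) :
    (hermiteP n).natDegree ≤ n ∧ (hermiteP n).coeff n = 2 ^ n := by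
  induction n with
  | zero => simp [hermiteP]
  | succ n ih =>
    obtain ⟨h1, h2⟩ := ih
    have hd : (derivative (hermiteP n)).natDegree ≤ n :=
      (natDegree_derivative_le _).trans (by omega)
    refine ⟨?_, ?_⟩
    · rw [hermiteP]
      refine (natDegree_sub_le _ _).trans (max_le ?_ (by omega))
      refine natDegree_mul_le.trans ?_
      have : (2 * X : ℝ[X]).natDegree ≤ 1 := by
        simp
      omega
    · rw [hermiteP, coeff_sub, coeff_eq_zero_of_natDegree_lt (Nat.lt_succ_of_le hd), mul_assoc,
        show (2 : ℝ[X]) = C 2 from rfl, coeff_C_mul, coeff_X_mul, h2]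
      ring

lemma coeff_prod_sum_of_natDegree_le {ι : Type*} (t : Finset ι) (p : ι → ℝ[X]) (b : ι → ℕ)
    (h : ∀ j ∈ t, (p j).natDegree ≤ b j) :
    (∏ j ∈ t, p j).coeff (∑ j ∈ t, b j) = ∏ j ∈ t, (p j).coeff (b j) := by
  classical
  induction t using Finset.induction_on with
  | empty => simp
  | insert a t ha ih =>
    have ht := fun j hj => h j (Finset.mem_insert_of_mem hj)
    rw [Finset.prod_insert ha, Finset.sum_insert ha, Finset.prod_insert ha, ← ih ht]
    exact coeff_mul_add_eq_of_natDegree_le (h a (Finset.mem_insert_self a t))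
      ((natDegree_prod_le t p).trans (Finset.sum_le_sum ht))

/-- Hermite polynomials of distinct degrees have a nonzero Wronskian. After multiplying row `i` by
`X ^ i`, the entries of column `j` have degree at most `s j`, and the coefficient of the determinant
in degree `∑ s j` is, up to powers of two, the determinant of the falling factorials of the `s j`,
which is a Vandermonde determinant. -/
lemma wronskian_ne_zero {m : ℕ} (s : Fin m → ℕ) (hs : Function.Injective s) :
    _root_.wronskian (fun j => hermiteP (s j)) ≠ 0 := by
  intro h0
  set B : Matrix (Fin m) (Fin m) ℝ[X] :=
    Matrix.of fun i j => X ^ (i : ℕ) * derivative^[(i : ℕ)] (hermiteP (s j)) with hB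
  have hBdet : B.det = 0 := by
    have := Matrix.det_mul_column (fun i : Fin m => (X : ℝ[X]) ^ (i : ℕ))
      (Matrix.of fun i j : Fin m => derivative^[(i : ℕ)] (hermiteP (s j)))
    rw [_root_.wronskian] at h0
    rw [h0, mul_zero] at this
    exact this
  have hdeg : ∀ i j, (B i j).natDegree ≤ s j := by
    intro i j
    simp only [hB, Matrix.of_apply]
    by_cases hi : (i : ℕ) ≤ s j
    · refine natDegree_mul_le.trans ?_
      have h1 := natDegree_iterate_derivative (hermiteP (s j)) (i : ℕ)
      have h2 := (hermiteP_natDegree_coeff (s j)).1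
      rw [natDegree_X_pow]
      omega
    · rw [iterate_derivative_eq_zero
        ((hermiteP_natDegree_coeff (s j)).1.trans_lt (not_le.mp hi))]
      simp
  have hcoeff : ∀ i j, (B i j).coeff (s j) = 2 ^ s j * ((s j).descFactorial i : ℝ) := by
    intro i j
    simp only [hB, Matrix.of_apply]
    by_cases hi : (i : ℕ) ≤ s j
    · rw [coeff_X_pow_mul', if_pos hi, coeff_iterate_derivative, Nat.sub_add_cancel hi,
        (hermiteP_natDegree_coeff (s j)).2, nsmul_eq_mul, mul_comm]
    · rw [iterate_derivative_eq_zero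
        ((hermiteP_natDegree_coeff (s j)).1.trans_lt (not_le.mp hi)),
        Nat.descFactorial_of_lt (not_le.mp hi)]
      simp
  have hlead : B.det.coeff (∑ j, s j) =
      (Matrix.of fun i j : Fin m => 2 ^ s j * ((s j).descFactorial i : ℝ)).det := by
    rw [Matrix.det_apply, Matrix.det_apply, finsetSum_coeff]
    refine Finset.sum_congr rfl fun σ _ => ?_
    rw [coeff_smul]
    congr 1
    rw [coeff_prod_sum_of_natDegree_le _ _ _ fun j _ => hdeg (σ j) j]
    simp [hcoeff]
  have hv : (Matrix.of fun i j : Fin m => ((s i).descFactorial j : ℝ)).det =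
      (Matrix.vandermonde fun i => (s i : ℝ)).det := by
    rw [Matrix.det_eval_matrixOfPolynomials_eq_det_vandermonde (fun i => (s i : ℝ))
      (fun j => descPochhammer ℝ j) (fun j => descPochhammer_natDegree ..)
      (fun j => monic_descPochhammer ..)]
    congr 1
    ext i j
    simp [descPochhammer_eval_eq_descFactorial]
  have hrow := Matrix.det_mul_row (fun j => (2 : ℝ) ^ s j)
    (Matrix.of fun i j : Fin m => ((s j).descFactorial i : ℝ))
  simp only [Matrix.of_apply] at hrow
  rw [hBdet, coeff_zero, hrow, ← Matrix.det_transpose, eq_comm] at hlead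
  rcases mul_eq_zero.mp hlead with h | h
  · exact (Finset.prod_ne_zero_iff.mpr fun j _ => by positivity) h
  · have hvand := hv.symm.trans h
    exact Matrix.det_vandermonde_ne_zero_iff.mpr (fun a b hab => hs (Nat.cast_injective hab)) hvand

/-- Differentiating a Wronskian differentiates its last row only: differentiating any other row
makes it equal to the next one. -/
lemma derivative_wronskian_succ {n : ℕ} (S : Fin (n + 1) → ℝ[X]) :
    derivative (_root_.wronskian S) =
      (Matrix.of fun r c : Fin (n + 1) =>
        derivative^[if (r : ℕ) < n then (r : ℕ) else r + 1] (S c)).det := by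
  have key : derivative (_root_.wronskian S) = ∑ k : Fin (n + 1),
      (Matrix.of fun r c : Fin (n + 1) =>
        derivative^[if r = k then (r : ℕ) + 1 else r] (S c)).det := by
    simp only [_root_.wronskian, Matrix.det_apply, derivative_sum]
    rw [Finset.sum_comm]
    refine Finset.sum_congr rfl fun σ _ => ?_
    rw [← Finset.smul_sum, Units.smul_def, Units.smul_def, derivative_smul, derivative_prod_finset]
    congr 1
    refine Eq.trans ?_ (Equiv.sum_comp σ _)
    refine Finset.sum_congr rfl fun k _ => ?_
    rw [← Finset.prod_erase_mul _ _ (Finset.mem_univ k)]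
    congr 1
    · refine Finset.prod_congr rfl fun i hi => ?_
      have : σ i ≠ σ k := fun h => (Finset.ne_of_mem_erase hi) (σ.injective h)
      simp [this]
    · simp [Function.iterate_succ_apply']
  rw [key, Finset.sum_eq_single (Fin.last n)]
  · congr 1
    ext1 r c
    have : (r : ℕ) < n ↔ r ≠ Fin.last n := by
      rw [← Fin.lt_last_iff_ne_last]; rfl
    by_cases h : r = Fin.last n <;> simp [h, this]
  · intro k _ hk
    have hk' : (k : ℕ) < n := by
      have := Fin.lt_last_iff_ne_last.mpr hk
      exact this
    refine Matrix.det_zero_of_row_eq (i := k) (j := ⟨k + 1, by omega⟩) ?_ ?_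
    · intro h; simpa using congrArg Fin.val h
    · funext c
      have : (⟨(k : ℕ) + 1, by omega⟩ : Fin (n + 1)) ≠ k := by
        intro h; simpa using congrArg Fin.val h
      simp [this]
  · simp

/-- Expansion along the last column: `f ↦ W[S, f]` is a differential operator
`W[S] ∂^m - W[S]′ ∂^(m-1) + ⋯`. -/
lemma exists_wronskian_snoc {m : ℕ} (S : Fin m → ℝ[X]) :
    ∃ y : ℕ → ℝ[X],
      (∀ f, _root_.wronskian (Fin.snoc S f) = _root_.wronskian S * derivative^[m] f +
        ∑ i ∈ Finset.range m, y i * derivative^[i] f) ∧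
      ∀ n, m = n + 1 → y n = -derivative (_root_.wronskian S) := by
  -- `mi i` is the minor that omits the row of `i`-th derivatives.
  let mi : ℕ → ℝ[X] := fun i => (Matrix.of fun r c : Fin m =>
    derivative^[if (r : ℕ) < i then (r : ℕ) else r + 1] (S c)).det
  refine ⟨fun i => (-1) ^ (i + m) * mi i, fun f => ?_, ?_⟩
  · have h1 : _root_.wronskian (Fin.snoc S f) =
        ∑ i ∈ Finset.range (m + 1), (-1) ^ (i + m) * mi i * derivative^[i] f := by
      rw [Finset.sum_range, _root_.wronskian, Matrix.det_succ_column _ (Fin.last m)]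
      refine Finset.sum_congr rfl fun i _ => ?_
      have : (Matrix.submatrix (Matrix.of fun i j : Fin (m + 1) => derivative^[(i : ℕ)]
          ((Fin.snoc S f : Fin (m + 1) → ℝ[X]) j)) i.succAbove (Fin.last m).succAbove).det =
          mi i := by
        congr 1
        ext1 r c
        simp only [Matrix.submatrix_apply, Matrix.of_apply, Fin.succAbove_last,
          Fin.snoc_castSucc]
        congr 2
        simp only [Fin.succAbove, Fin.lt_def, Fin.val_castSucc]
        split_ifs <;> simp
      rw [this]
      simp only [Matrix.of_apply, Fin.snoc_last, Fin.val_last]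
      ring
    have h2 : mi m = _root_.wronskian S := by
      simp only [mi, _root_.wronskian]
      congr 1
      ext1 r c
      simp
    rw [h1, Finset.sum_range_succ, h2, ← two_mul, pow_mul]
    simp
    ring
  · rintro n rfl
    have : n + (n + 1) = 2 * n + 1 := by ring
    simp only [mi, derivative_wronskian_succ S, this, pow_succ, pow_mul]
    simp

lemma wronskian_snoc_self {m : ℕ} (S : Fin m → ℝ[X]) (k : Fin m) :
    _root_.wronskian (Fin.snoc S (S k)) = 0 := by
  refine Matrix.det_zero_of_column_eq (i := k.castSucc) (j := Fin.last m)
    (Fin.castSucc_lt_last k).ne fun i => ?_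
  simp

lemma wronskian_snoc_C_mul {m : ℕ} (S : Fin m → ℝ[X]) (c : ℝ) (f : ℝ[X]) :
    _root_.wronskian (Fin.snoc S (C c * f)) = C c * _root_.wronskian (Fin.snoc S f) := by
  obtain ⟨y, hy, -⟩ := exists_wronskian_snoc S
  simp only [hy, iterate_derivative_C_mul, mul_add, Finset.mul_sum]
  congr 1
  · ring
  · exact Finset.sum_congr rfl fun i _ => by ring

/-- `Z` is a differential operator of order less than `m` with polynomial coefficients. -/
def OrderLT (m : ℕ) (Z : ℝ[X] → ℝ[X]) : Prop :=
  ∃ g : ℕ → ℝ[X], ∀ f, Z f = ∑ i ∈ Finset.range m, g i * derivative^[i] f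

/-- An operator of order less than `m` that kills `m` functions with nonzero Wronskian is zero. -/
lemma OrderLT.eq_zero {m : ℕ} {Z : ℝ[X] → ℝ[X]} (hZ : OrderLT m Z) {S : Fin m → ℝ[X]}
    (hS : _root_.wronskian S ≠ 0) (hk : ∀ k, Z (S k) = 0) (f : ℝ[X]) : Z f = 0 := by
  obtain ⟨g, hg⟩ := hZ
  have h := Matrix.eq_zero_of_vecMul_eq_zero hS (v := fun i : Fin m => g i) (by
    funext k
    have := hk k
    rw [hg, Finset.sum_range] at this
    simpa [Matrix.vecMul, dotProduct] using this)
  rw [hg, Finset.sum_range]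
  exact Finset.sum_eq_zero fun i _ => by rw [show g i = 0 from congrFun h i, zero_mul]

/-- A sum of terms of order at most `m` whose `∂^m` coefficients cancel. -/
lemma orderLT_of_cancel {m : ℕ} {Z : ℝ[X] → ℝ[X]} (t : ℝ[X]) (α β : ℕ → ℝ[X])
    (hZ : ∀ f, Z f = t * derivative^[m] f +
      ∑ i ∈ Finset.range m, (α i * derivative^[i] f + β i * derivative^[i + 1] f))
    (h0 : m = 0 → t = 0) (hβ : ∀ n, m = n + 1 → β n = -t) : OrderLT m Z := by
  cases m with
  | zero => exact ⟨0, fun f => by simp [hZ, h0]⟩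
  | succ n =>
    refine ⟨fun i => α i + if i = 0 then 0 else β (i - 1), fun f => ?_⟩
    rw [hZ, Finset.sum_add_distrib, Finset.sum_range_succ (fun i => β i * _), hβ n rfl]
    simp only [add_mul, Finset.sum_add_distrib]
    rw [Finset.sum_range_succ' (fun i => (if i = 0 then 0 else β (i - 1)) * _)]
    simp
    ring

/-- Iterated derivatives of the Hermite operator `f″ - 2 X f′`. -/
lemma iterate_derivative_T (i : ℕ) (f : ℝ[X]) :
    derivative^[i] (derivative (derivative f) - 2 * X * derivative f) =
      derivative^[i + 2] f - 2 * X * derivative^[i + 1] f - 2 * (i : ℝ[X]) * derivative^[i] f := by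
  induction i with
  | zero => simp
  | succ i ih =>
    rw [Function.iterate_succ_apply', ih]
    simp only [Function.iterate_succ_apply', derivative_sub, derivative_mul, derivative_ofNat,
      derivative_X, derivative_natCast]
    push_cast
    ring

/-- Jacobi's identity `W[S] W[S, a, f] = W[W[S, a], W[S, f]]`. As operators in `f`, both sides agree
in orders `m + 1` and `m` and kill `S`. -/
lemma wronskian_jacobi {m : ℕ} (S : Fin m → ℝ[X]) (hS : _root_.wronskian S ≠ 0) (a f : ℝ[X]) :
    _root_.wronskian S * _root_.wronskian (Fin.snoc (Fin.snoc S a : Fin (m + 1) → ℝ[X]) f) =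
      _root_.wronskian (Fin.snoc S a) * derivative (_root_.wronskian (Fin.snoc S f)) -
      derivative (_root_.wronskian (Fin.snoc S a)) * _root_.wronskian (Fin.snoc S f) := by
  obtain ⟨y, hy, hy'⟩ := exists_wronskian_snoc S
  obtain ⟨l, hl, hl'⟩ := exists_wronskian_snoc (Fin.snoc S a : Fin (m + 1) → ℝ[X])
  have hl'' := hl' m rfl
  set w := _root_.wronskian S
  set A := _root_.wronskian (Fin.snoc S a : Fin (m + 1) → ℝ[X])
  rw [← sub_eq_zero]
  refine OrderLT.eq_zero (Z := fun f =>
    w * _root_.wronskian (Fin.snoc (Fin.snoc S a : Fin (m + 1) → ℝ[X]) f) -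
      (A * derivative (_root_.wronskian (Fin.snoc S f)) -
      derivative A * _root_.wronskian (Fin.snoc S f))) ?_ hS ?_ f
  · refine orderLT_of_cancel (-(A * derivative w))
      (fun i => w * l i - A * derivative (y i) + derivative A * y i) (fun i => -(A * y i)) ?_ ?_ ?_
    · intro f
      simp only [hy, hl, Finset.sum_range_succ, hl'', derivative_add, derivative_mul,
        derivative_sum, Function.iterate_succ_apply', Finset.sum_add_distrib, Finset.mul_sum,
        mul_add, sub_mul, add_mul, Finset.sum_sub_distrib, neg_mul, Finset.sum_neg_distrib,
        mul_assoc]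
      ring
    · rintro rfl
      simp [w, _root_.wronskian]
    · intro n hn
      rw [hy' n hn]
      ring
  · intro k
    have h1 := wronskian_snoc_self (Fin.snoc S a : Fin (m + 1) → ℝ[X]) k.castSucc
    rw [Fin.snoc_castSucc] at h1
    simp only [h1, wronskian_snoc_self]
    simp

/-- Intertwining relation: if `S` consists of eigenfunctions of `T f = f″ - 2 X f′`, then with
`w = W[S]` and `Y = W[S, f]`,
`w Y″ - 2 w′ Y′ + w″ Y - 2 X (w Y′ - w′ Y) - 2 m w Y = w W[S, T f]`.
The two sides differ by an operator in `f` of order less than `m` that kills `S`. -/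
lemma wronskian_bilinear {m : ℕ} (S : Fin m → ℝ[X]) (hS : _root_.wronskian S ≠ 0) (lam : Fin m → ℝ)
    (hlam : ∀ k, derivative (derivative (S k)) - 2 * X * derivative (S k) = C (lam k) * S k)
    (f : ℝ[X]) :
    _root_.wronskian S * derivative (derivative (_root_.wronskian (Fin.snoc S f))) -
      2 * derivative (_root_.wronskian S) * derivative (_root_.wronskian (Fin.snoc S f)) +
      derivative (derivative (_root_.wronskian S)) * _root_.wronskian (Fin.snoc S f) -
      2 * X * (_root_.wronskian S * derivative (_root_.wronskian (Fin.snoc S f)) -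
        derivative (_root_.wronskian S) * _root_.wronskian (Fin.snoc S f)) -
      2 * (m : ℝ[X]) * _root_.wronskian S * _root_.wronskian (Fin.snoc S f) =
    _root_.wronskian S *
      _root_.wronskian (Fin.snoc S (derivative (derivative f) - 2 * X * derivative f)) := by
  obtain ⟨y, hy, hy'⟩ := exists_wronskian_snoc S
  set w := _root_.wronskian S with hw
  rw [← sub_eq_zero]
  refine OrderLT.eq_zero (Z := fun f => w * derivative (derivative (_root_.wronskian (Fin.snoc S f))) -
      2 * derivative w * derivative (_root_.wronskian (Fin.snoc S f)) +
      derivative (derivative w) * _root_.wronskian (Fin.snoc S f) -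
      2 * X * (w * derivative (_root_.wronskian (Fin.snoc S f)) -
        derivative w * _root_.wronskian (Fin.snoc S f)) -
      2 * (m : ℝ[X]) * w * _root_.wronskian (Fin.snoc S f) -
    w * _root_.wronskian (Fin.snoc S (derivative (derivative f) - 2 * X * derivative f))) ?_ hS ?_ f
  · refine orderLT_of_cancel
      (2 * (w * derivative (derivative w) - derivative w ^ 2))
      (fun i => w * derivative (derivative (y i)) - 2 * derivative w * derivative (y i) +
        derivative (derivative w) * y i - 2 * X * (w * derivative (y i) - derivative w * y i) -
        2 * (m : ℝ[X]) * w * y i + 2 * (i : ℝ[X]) * w * y i)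
      (fun i => 2 * w * derivative (y i) - 2 * derivative w * y i) ?_ ?_ ?_
    · intro f
      have hsum : ∀ i, (w * derivative (derivative (y i)) - 2 * derivative w * derivative (y i) +
          derivative (derivative w) * y i - 2 * X * (w * derivative (y i) - derivative w * y i) -
          2 * (m : ℝ[X]) * w * y i + 2 * (i : ℝ[X]) * w * y i) * derivative^[i] f +
          (2 * w * derivative (y i) - 2 * derivative w * y i) * derivative^[i + 1] f =
          w * derivative (derivative (y i * derivative^[i] f)) -
          2 * derivative w * derivative (y i * derivative^[i] f) +
          derivative (derivative w) * (y i * derivative^[i] f) -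
          2 * X * (w * derivative (y i * derivative^[i] f)) +
          2 * X * (derivative w * (y i * derivative^[i] f)) -
          2 * (m : ℝ[X]) * w * (y i * derivative^[i] f) -
          w * (y i * derivative^[i] (derivative (derivative f) - 2 * X * derivative f)) := by
        intro i
        rw [iterate_derivative_T]
        simp only [derivative_mul, derivative_add, Function.iterate_succ_apply']
        ring
      simp only [hsum, Finset.sum_add_distrib, Finset.sum_sub_distrib, ← Finset.mul_sum,
        ← derivative_sum, hy]
      rw [iterate_derivative_T]
      simp only [derivative_mul, derivative_add, Function.iterate_succ_apply']
      ring
    · rintro rfl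
      simp [hw, _root_.wronskian]
    · intro n hn
      rw [hy' n hn]
      simp only [derivative_neg]
      ring
  · intro k
    simp only [hlam, wronskian_snoc_C_mul, wronskian_snoc_self]
    simp

/-- Moving entry `j` to the last place multiplies every Wronskian by the same constant (a sign). -/
lemma wronskian_move {m : ℕ} (j : Fin (m + 1)) :
    ∃ s : ℝ, ∀ f : Fin (m + 1) → ℝ[X],
      _root_.wronskian f = C s * _root_.wronskian (Fin.snoc (fun i => f (j.succAbove i)) (f j)) := by
  let σ : Equiv.Perm (Fin (m + 1)) := (finSuccEquiv' j).trans (finSuccEquiv' (Fin.last m)).symm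
  refine ⟨((Equiv.Perm.sign σ : ℤ) : ℝ), fun f => ?_⟩
  have h : f = (Fin.snoc (fun i => f (j.succAbove i)) (f j) : Fin (m + 1) → ℝ[X]) ∘ σ := by
    funext k
    rcases Fin.eq_self_or_eq_succAbove j k with rfl | ⟨i, rfl⟩
    · simp [σ]
    · simp [σ]
  have h2 := Matrix.det_permute' σ (Matrix.of fun i k : Fin (m + 1) => derivative^[(i : ℕ)]
    ((Fin.snoc (fun i => f (j.succAbove i)) (f j) : Fin (m + 1) → ℝ[X]) k))
  conv_lhs => rw [h]
  rw [_root_.wronskian, _root_.wronskian]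
  simp only [map_intCast]
  exact h2

/-- The bilinear form of Crum's theorem for Hermite seeds: `W[S, H_n] / W[S]` is an eigenfunction
of the transformed operator. -/
lemma hermite_crum {m : ℕ} (s : Fin m → ℕ) (hs : Function.Injective s) (n : ℕ) (w A : ℝ[X])
    (hw : w = _root_.wronskian fun k => hermiteP (s k))
    (hA : A = _root_.wronskian (Fin.snoc (fun k => hermiteP (s k)) (hermiteP n))) :
    w * derivative (derivative A) - 2 * derivative w * derivative A + derivative (derivative w) * A
      - 2 * X * (w * derivative A - derivative w * A) - 2 * (m : ℝ[X]) * w * A =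
    -(2 * (n : ℝ[X]) * w * A) := by
  have ode : ∀ n, derivative (derivative (hermiteP n)) - 2 * X * derivative (hermiteP n) =
      C (-(2 * (n : ℝ))) * hermiteP n := fun n => by
    rw [hermiteP_ode, C_neg]; ring
  have h := wronskian_bilinear (fun k => hermiteP (s k)) (wronskian_ne_zero s hs)
    (fun k => -(2 * (s k : ℝ))) (fun k => ode (s k)) (hermiteP n)
  rw [ode n, wronskian_snoc_C_mul, ← hw, ← hA] at h
  rw [h]
  simp only [map_neg, map_mul, map_ofNat, map_natCast]
  ring

/-- The basic equation follows algebraically from the bilinear equations of `A`, `E`, `H` over `w`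
together with `w Q = H A′ - H′ A` and `w R = H E′ - H′ E`; here the seed to be exchanged stands
last. -/
lemma basic_equation_of_bilinear (w A E H Q R m a e n : ℝ[X]) (hw : w ≠ 0)
    (ha : derivative a = 0) (hn : derivative n = 0)
    (hA : w * derivative (derivative A) - 2 * derivative w * derivative A +
      derivative (derivative w) * A - 2 * X * (w * derivative A - derivative w * A) -
      2 * m * w * A = -(2 * a * w * A))
    (hE : w * derivative (derivative E) - 2 * derivative w * derivative E +
      derivative (derivative w) * E - 2 * X * (w * derivative E - derivative w * E) -
      2 * m * w * E = -(2 * e * w * E))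
    (hH : w * derivative (derivative H) - 2 * derivative w * derivative H +
      derivative (derivative w) * H - 2 * X * (w * derivative H - derivative w * H) -
      2 * m * w * H = -(2 * n * w * H))
    (hQ : w * Q = H * derivative A - derivative H * A)
    (hR : w * R = H * derivative E - derivative H * E) :
    E * (-(derivative (derivative Q)) + 2 * X * derivative Q) +
      2 * derivative E * derivative Q - derivative (derivative E) * Q -
      2 * X * derivative E * Q + (2 * (m + 1) - 2 * (a + e - n)) * E * Q =
    4 * (n - a) * R * A := by
  have hQ1 : derivative w * Q + w * derivative Q =
      H * derivative (derivative A) - derivative (derivative H) * A := by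
    have := congrArg derivative hQ
    simp only [derivative_mul, derivative_sub] at this
    linear_combination this
  -- The first-order relation for `Q`, obtained after cancelling one factor `w`.
  have hI1 : w * derivative Q = derivative w * Q + 2 * X * w * Q + 2 * (n - a) * A * H := by
    apply mul_left_cancel₀ hw
    linear_combination w * hQ1 + H * hA - A * hH +
      (-2 * derivative w - 2 * X * w) * hQ
  have hI2 := congrArg derivative hI1
  simp only [derivative_mul, derivative_add, derivative_sub, derivative_ofNat, derivative_X, ha,
    hn] at hI2
  apply mul_left_cancel₀ hw
  linear_combination (-E) * hI2 + 2 * derivative E * hI1 - Q * hE +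
    2 * (n - a) * E * hQ - 4 * (n - a) * A * hR

/-- **The basic equation with the roles of `D` and `D′` exchanged**:
`Ξ_{D′}·(H̃_{D′} P_{D,N} − Ẽ(D)·P_{D,N}) = ℰ″(D)·P_{D′,N}·Ξ_D` for the Krein–Adler
Hermite system, multiplied through by `Ξ_{D′}` to give a polynomial identity, with the
same eigenvalue `Ẽ = 2(d_j + ε − N)` and coefficient `E″ = 4(N − d_j)`. -/
theorem KA_hermite_basic_equation_exchanged
    (M N : ℕ) (d : Fin M → ℕ) (hpos : ∀ k, 0 < d k) (hmono : StrictMono d)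
    (hN : ∀ k, N ≠ d k)
    (j : Fin M) (ε : ℕ) (hε : ε < d j) (hεD : ∀ k, ε ≠ d k)
    (Etil E'' : ℝ)
    (hEtil : Etil = 2 * ((d j : ℝ) + (ε : ℝ) - (N : ℝ)))
    (hE'' : E'' = 4 * ((N : ℝ) - (d j : ℝ))) :
    XiHermite (Function.update d j ε) *
        (-(Polynomial.derivative (Polynomial.derivative (KAHermite d N))) +
          2 * Polynomial.X * Polynomial.derivative (KAHermite d N)) +
      2 * Polynomial.derivative (XiHermite (Function.update d j ε)) *
        Polynomial.derivative (KAHermite d N) -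
      Polynomial.derivative (Polynomial.derivative (XiHermite (Function.update d j ε))) *
        KAHermite d N -
      2 * Polynomial.X * Polynomial.derivative (XiHermite (Function.update d j ε)) *
        KAHermite d N +
      Polynomial.C (2 * (M : ℝ) - Etil) * XiHermite (Function.update d j ε) * KAHermite d N
    = Polynomial.C E'' * KAHermite (Function.update d j ε) N * XiHermite d := by
  cases M with
  | zero => exact j.elim0
  | succ m =>
    -- `s` and `t` need not be related: both sides of the identity scale by `s * t`.
    obtain ⟨s, hs⟩ := wronskian_move j
    obtain ⟨t, ht⟩ := wronskian_move j.castSucc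
    set S : Fin m → ℕ := fun i => d (j.succAbove i) with hSdef
    have hSinj : Function.Injective S :=
      hmono.injective.comp Fin.succAbove_right_injective
    have hrest : ∀ x (i : Fin m), Function.update d j x (j.succAbove i) = S i := fun x i => by
      simp [hSdef, Fin.succAbove_ne]
    have hXi : ∀ x, XiHermite (Function.update d j x) =
        C s * _root_.wronskian (Fin.snoc (fun k => hermiteP (S k)) (hermiteP x)) := fun x => by
      rw [XiHermite, hs]
      simp only [hrest, Function.update_self]
    have hKA : ∀ x, KAHermite (Function.update d j x) N =
        C t * _root_.wronskian (Fin.snoc (Fin.snoc (fun k => hermiteP (S k)) (hermiteP N) :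
          Fin (m + 1) → ℝ[X]) (hermiteP x)) := fun x => by
      rw [KAHermite, ht]
      congr 2
      congr 1
      · funext i
        refine Fin.lastCases ?_ (fun i => ?_) i
        · rw [Fin.succAbove_of_le_castSucc _ _
            (Fin.castSucc_le_castSucc_iff.mpr (Fin.le_last j)), Fin.succ_last, Fin.snoc_last, Fin.snoc_last]
        · rw [Fin.castSucc_succAbove_castSucc, Fin.snoc_castSucc, Fin.snoc_castSucc, hrest]
      · simp
    have hd : Function.update d j (d j) = d := Function.update_eq_self j d
    have hXid := hXi (d j)
    have hKAd := hKA (d j)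
    rw [hd] at hXid hKAd
    have key := basic_equation_of_bilinear _ _ _ _ _ _ (m : ℝ[X]) (d j : ℝ[X]) (ε : ℝ[X])
      (N : ℝ[X]) (wronskian_ne_zero S hSinj) derivative_natCast derivative_natCast
      (hermite_crum S hSinj (d j) _ _ rfl rfl) (hermite_crum S hSinj ε _ _ rfl rfl)
      (hermite_crum S hSinj N _ _ rfl rfl)
      (wronskian_jacobi _ (wronskian_ne_zero S hSinj) (hermiteP N) (hermiteP (d j)))
      (wronskian_jacobi _ (wronskian_ne_zero S hSinj) (hermiteP N) (hermiteP ε))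
    rw [hXid, hKAd, hXi, hKA, hEtil, hE'']
    simp only [derivative_C_mul, map_sub, map_add, map_mul, map_ofNat, map_natCast]
    push_cast
    linear_combination C s * C t * key
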